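/- arXiv:1905.09320 — 4 statements merged into one kernel-verified Lean document; each statement's English description precedes it below -/
import Mathlib

section
/- Let a ~ N(0, I_n), x, h ∈ R^n with ‖x‖²‖h‖² > (x^T h)², and let f: R → R be bounded measurable. Then E[(a^T h)² f(a^T x / a^T h)] = ∫_{-∞}^{∞} f(u) · (2/π) · (1−cos²θ)^{3/2} ρ ‖h‖² / ((uρ − cos θ)² + 1 − cos²θ)² du, where ρ = ‖h‖/‖x‖ and cos θ = x^T h/(‖x‖‖h‖). -/
open MeasureTheory ProbabilityTheory Real

/-- The standard Gaussian measure `N(0, I_n)` on `ℝⁿ`. -/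
noncomputable def stdGaussian (n : ℕ) : Measure (Fin n → ℝ) :=
  Measure.pi fun _ => gaussianReal 0 1

lemma int_t3 (b : ℝ) (hb : 0 < b) :
    ∫⁻ t : ℝ, ENNReal.ofReal (|t| ^ 3 * exp (-b * t ^ 2)) = ENNReal.ofReal (1 / b ^ 2) := by
  have hi : Integrable (fun t : ℝ => |t| ^ 3 * exp (-b * t ^ 2)) := by
    have := (integrable_rpow_mul_exp_neg_mul_sq hb (s := 3) (by norm_num)).norm
    refine this.congr (Filter.Eventually.of_forall fun t => ?_)
    have h3 : t ^ (3 : ℝ) = t ^ 3 := by exact_mod_cast Real.rpow_natCast t 3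
    simp only [h3, norm_mul, norm_pow, Real.norm_eq_abs, abs_exp]
  rw [← ofReal_integral_eq_lintegral_ofReal hi (Filter.Eventually.of_forall fun t => by positivity)]
  congr 1
  have h1 := integral_comp_abs (f := fun t : ℝ => t ^ 3 * exp (-b * t ^ 2))
  simp only [sq_abs] at h1
  rw [h1]
  have h2 := integral_rpow_mul_exp_neg_mul_rpow (p := 2) (q := 3) (b := b) (by norm_num) (by norm_num) hb
  have h3 : ∀ t : ℝ, t ^ (3 : ℝ) = t ^ 3 := fun t => by exact_mod_cast Real.rpow_natCast t 3
  have h4 : ∀ t : ℝ, t ^ (2 : ℝ) = t ^ 2 := fun t => by exact_mod_cast Real.rpow_natCast t 2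
  simp only [h3, h4] at h2
  rw [h2]
  have e : (-(3 + 1) / 2 : ℝ) = -(2 : ℕ) := by norm_num
  have e2 : ((3 + 1) / 2 : ℝ) = (1 : ℕ) + 1 := by norm_num
  rw [e, Real.rpow_neg hb.le, Real.rpow_natCast, e2, Real.Gamma_nat_eq_factorial]
  norm_num
  ring

lemma charFun_lin (n : ℕ) (c : Fin n → ℝ) :
    ∫ a : Fin n → ℝ, Complex.exp (((∑ i, a i * c i : ℝ) : ℂ) * Complex.I)
      ∂(Measure.pi fun _ => gaussianReal 0 1) = Complex.exp (-((∑ i, c i ^ 2 : ℝ) : ℂ) / 2) := by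
  have : ∀ a : Fin n → ℝ, Complex.exp (((∑ i, a i * c i : ℝ) : ℂ) * Complex.I)
      = ∏ i, Complex.exp ((c i) * (a i) * Complex.I) := by
    intro a
    rw [← Complex.exp_sum]
    push_cast
    rw [Finset.sum_mul]
    congr 1
    exact Finset.sum_congr rfl fun i _ => by ring
  simp_rw [this]
  rw [integral_fintype_prod_eq_prod (𝕜 := ℂ) (μ := fun _ : Fin n => gaussianReal 0 1) (fun i (t : ℝ) => Complex.exp ((c i) * t * Complex.I))]
  simp_rw [← charFun_apply_real, charFun_gaussianReal]
  rw [← Complex.exp_sum]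
  congr 1
  push_cast
  rw [neg_div, Finset.sum_div, ← Finset.sum_neg_distrib]
  exact Finset.sum_congr rfl fun i _ => by simp

lemma charFun_two (p q : ℝ) :
    ∫ z : ℝ × ℝ, Complex.exp (((p * z.1 + q * z.2 : ℝ) : ℂ) * Complex.I)
      ∂((gaussianReal 0 1).prod (gaussianReal 0 1))
      = Complex.exp (-((p ^ 2 + q ^ 2 : ℝ) : ℂ) / 2) := by
  have : ∀ z : ℝ × ℝ, Complex.exp (((p * z.1 + q * z.2 : ℝ) : ℂ) * Complex.I)
      = Complex.exp (p * z.1 * Complex.I) * Complex.exp (q * z.2 * Complex.I) := by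
    intro z
    rw [← Complex.exp_add]
    push_cast
    ring_nf
  simp_rw [this]
  rw [integral_prod_mul (fun t : ℝ => Complex.exp (p * t * Complex.I))
    (fun t : ℝ => Complex.exp (q * t * Complex.I))]
  simp_rw [← charFun_apply_real, charFun_gaussianReal]
  rw [← Complex.exp_add]
  congr 1
  push_cast
  simp
  ring

lemma law_eq (n : ℕ) (x h : Fin n → ℝ) (α β r : ℝ)
    (hA : ∑ i, x i ^ 2 = α ^ 2 + β ^ 2) (hB : ∑ i, h i ^ 2 = r ^ 2)
    (hC : ∑ i, x i * h i = β * r) :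
    (Measure.pi fun _ : Fin n => gaussianReal 0 1).map
        (fun a => ((∑ i, a i * x i, ∑ i, a i * h i) : ℝ × ℝ))
      = ((gaussianReal 0 1).prod (gaussianReal 0 1)).map
        (fun z : ℝ × ℝ => ((α * z.1 + β * z.2, r * z.2) : ℝ × ℝ)) := by
  have m1 : Measurable (fun a : Fin n → ℝ => ((∑ i, a i * x i, ∑ i, a i * h i) : ℝ × ℝ)) := by
    fun_prop
  have m2 : Measurable (fun z : ℝ × ℝ => ((α * z.1 + β * z.2, r * z.2) : ℝ × ℝ)) := by fun_prop
  have : IsProbabilityMeasure ((Measure.pi fun _ : Fin n => gaussianReal 0 1).map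
        (fun a => ((∑ i, a i * x i, ∑ i, a i * h i) : ℝ × ℝ))) :=
    Measure.isProbabilityMeasure_map m1.aemeasurable
  have : IsProbabilityMeasure (((gaussianReal 0 1).prod (gaussianReal 0 1)).map
        (fun z : ℝ × ℝ => ((α * z.1 + β * z.2, r * z.2) : ℝ × ℝ))) :=
    Measure.isProbabilityMeasure_map m2.aemeasurable
  refine Measure.ext_of_charFunDual ?_
  ext L
  obtain ⟨l1, l2, hL⟩ : ∃ l1 l2 : ℝ, ∀ s t : ℝ, L (s, t) = s * l1 + t * l2 := by
    refine ⟨L (1, 0), L (0, 1), fun s t => ?_⟩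
    have : ((s, t) : ℝ × ℝ) = s • (1, 0) + t • (0, 1) := by simp
    rw [this, map_add, map_smul, map_smul, smul_eq_mul, smul_eq_mul]
  rw [charFunDual_apply, charFunDual_apply, integral_map m1.aemeasurable (by fun_prop),
    integral_map m2.aemeasurable (by fun_prop)]
  simp only [hL]
  have e1 : ∀ a : Fin n → ℝ, (∑ i, a i * x i) * l1 + (∑ i, a i * h i) * l2
      = ∑ i, a i * (x i * l1 + h i * l2) := by
    intro a
    rw [Finset.sum_mul, Finset.sum_mul, ← Finset.sum_add_distrib]
    exact Finset.sum_congr rfl fun i _ => by ring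
  have e2 : ∀ z : ℝ × ℝ, (α * z.1 + β * z.2) * l1 + r * z.2 * l2
      = (α * l1) * z.1 + (β * l1 + r * l2) * z.2 := by intro z; ring
  simp_rw [e1, e2]
  rw [charFun_lin, charFun_two]
  congr 4
  have : ∑ i, (x i * l1 + h i * l2) ^ 2
      = (∑ i, x i ^ 2) * l1 ^ 2 + (∑ i, h i ^ 2) * l2 ^ 2 + 2 * l1 * l2 * ∑ i, x i * h i := by
    rw [Finset.sum_mul, Finset.sum_mul, Finset.mul_sum, ← Finset.sum_add_distrib,
      ← Finset.sum_add_distrib]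
    exact Finset.sum_congr rfl fun i _ => by ring
  rw [this, hA, hB, hC]
  ring

lemma subst_aux (k b : ℝ) (hk : k ≠ 0) (G : ℝ → ENNReal) :
    ∫⁻ s, G s = ∫⁻ u, ENNReal.ofReal |k| * G (k * u + b) := by
  have := lintegral_image_eq_lintegral_abs_deriv_mul (s := Set.univ) (f := fun u : ℝ => k * u + b)
    (f' := fun _ => k) MeasurableSet.univ
    (fun u _ => by
      have := (((hasDerivAt_id u).const_mul k).add_const b).hasDerivWithinAt (s := Set.univ)
      rw [mul_one] at this
      exact this)
    (fun u _ v _ huv => by simpa [hk] using huv) G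
  rw [Set.image_univ, Set.range_eq_univ.2, setLIntegral_univ, setLIntegral_univ] at this
  · exact this
  · intro y
    exact ⟨(y - b) / k, by field_simp; ring⟩

lemma main_lint (α β r : ℝ) (hα : 0 < α) (hr : 0 < r) (g : ℝ → ENNReal) (hg : Measurable g) :
    ∫⁻ z : ℝ × ℝ, ENNReal.ofReal ((r * z.2) ^ 2) * g ((α * z.1 + β * z.2) / (r * z.2))
      ∂((gaussianReal 0 1).prod (gaussianReal 0 1))
      = ∫⁻ u, ENNReal.ofReal (2 * r ^ 3 / (π * α) / (1 + ((r * u - β) / α) ^ 2) ^ 2) * g u := by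
  rw [lintegral_prod_symm _ (by fun_prop)]
  rw [gaussianReal_of_var_ne_zero _ one_ne_zero]
  rw [lintegral_withDensity_eq_lintegral_mul _ (measurable_gaussianPDF _ _)
    (Measurable.lintegral_prod_left (by fun_prop))]
  have key : ∀ t : ℝ, t ≠ 0 → (gaussianPDF 0 1 * fun y => ∫⁻ s,
        ENNReal.ofReal ((r * y) ^ 2) * g ((α * s + β * y) / (r * y))
          ∂(volume.withDensity (gaussianPDF 0 1))) t
      = ∫⁻ u, ENNReal.ofReal (r ^ 3 / (2 * π * α) *
          (|t| ^ 3 * exp (-((1 + ((r * u - β) / α) ^ 2) / 2) * t ^ 2))) * g u := by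
    intro t ht
    simp only [Pi.mul_apply]
    rw [lintegral_withDensity_eq_lintegral_mul _ (measurable_gaussianPDF _ _) (by fun_prop)]
    rw [subst_aux (t * r / α) (-(t * β / α)) (by positivity)]
    rw [← lintegral_const_mul _ (by
      simp only [Pi.mul_apply]
      have := measurable_gaussianPDF 0 1
      fun_prop)]
    refine lintegral_congr fun u => ?_
    have e : (α * (t * r / α * u + -(t * β / α)) + β * t) / (r * t) = u := by
      field_simp; ring
    simp only [Pi.mul_apply]
    rw [e]
    simp only [← mul_assoc]
    congr 1
    rw [gaussianPDF, gaussianPDF, ← ENNReal.ofReal_mul (gaussianPDFReal_nonneg _ _ _),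
      ← ENNReal.ofReal_mul (mul_nonneg (gaussianPDFReal_nonneg _ _ _) (abs_nonneg _)),
      ← ENNReal.ofReal_mul (mul_nonneg (mul_nonneg (gaussianPDFReal_nonneg _ _ _) (abs_nonneg _))
        (gaussianPDFReal_nonneg _ _ _))]
    congr 1
    simp only [gaussianPDFReal, NNReal.coe_one, mul_one, sub_zero]
    have hp : (√(2 * π))⁻¹ * (√(2 * π))⁻¹ = (2 * π)⁻¹ := by
      rw [← mul_inv, Real.mul_self_sqrt (by positivity)]
    have hexp : exp (-((1 + ((r * u - β) / α) ^ 2) / 2) * t ^ 2)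
        = exp (-t ^ 2 / 2) * exp (-(t * r / α * u + -(t * β / α)) ^ 2 / 2) := by
      rw [← Real.exp_add]
      congr 1
      field_simp
      ring
    rw [hexp, abs_div, abs_mul, abs_of_pos hr, abs_of_pos hα]
    have h3 : |t| ^ 3 = |t| * t ^ 2 := by rw [← sq_abs t]; ring
    rw [h3]
    calc _ = ((√(2 * π))⁻¹ * (√(2 * π))⁻¹) * (r ^ 3 / α * (|t| * t ^ 2 * (exp (-t ^ 2 / 2) * exp (-(t * r / α * u + -(t * β / α)) ^ 2 / 2)))) := by ring
      _ = _ := by rw [hp]; field_simp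
  have hae : ∀ᵐ t : ℝ, t ≠ 0 := by simp [ae_iff]
  rw [lintegral_congr_ae (hae.mono key), lintegral_lintegral_swap (by fun_prop)]
  refine lintegral_congr fun u => ?_
  rw [lintegral_mul_const _ (by fun_prop)]
  congr 1
  have hc : 0 ≤ r ^ 3 / (2 * π * α) := by positivity
  simp_rw [ENNReal.ofReal_mul hc]
  rw [lintegral_const_mul _ (by fun_prop), int_t3 _ (by positivity), ← ENNReal.ofReal_mul hc]
  congr 1
  field_simp

/-- For `a ~ N(0, I_n)`, `x, h` with `‖x‖²‖h‖² > (xᵀh)²`, and bounded measurable `f`,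
`E[(aᵀh)² f(aᵀx / aᵀh)] = ∫ f(u) · (2/π)(1−cos²θ)^{3/2} ρ ‖h‖² / ((uρ − cos θ)² + 1 − cos²θ)² du`,
where `ρ = ‖h‖/‖x‖` and `cos θ = xᵀh/(‖x‖‖h‖)`. -/
theorem expectation_weighted_quadratic (n : ℕ) (x h : Fin n → ℝ)
    (hdet : (∑ i, x i ^ 2) * (∑ i, h i ^ 2) > (∑ i, x i * h i) ^ 2)
    (f : ℝ → ℝ) (hf : Measurable f) (hb : ∃ M : ℝ, ∀ v, |f v| ≤ M) :
    ∫ a, (∑ i, a i * h i) ^ 2 * f ((∑ i, a i * x i) / (∑ i, a i * h i)) ∂(stdGaussian n)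
      = ∫ u : ℝ,
          f u *
            (let ρ := Real.sqrt (∑ i, h i ^ 2) / Real.sqrt (∑ i, x i ^ 2)
             let c := (∑ i, x i * h i) / (Real.sqrt (∑ i, x i ^ 2) * Real.sqrt (∑ i, h i ^ 2))
             (2 / π) * (1 - c ^ 2) ^ ((3 : ℝ) / 2) * ρ * (∑ i, h i ^ 2) /
               ((u * ρ - c) ^ 2 + 1 - c ^ 2) ^ 2) := by
  set A := ∑ i, x i ^ 2 with hA
  set B := ∑ i, h i ^ 2 with hB
  set C := ∑ i, x i * h i with hC
  have hA0 : 0 ≤ A := Finset.sum_nonneg fun i _ => sq_nonneg _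
  have hB0 : 0 ≤ B := Finset.sum_nonneg fun i _ => sq_nonneg _
  have hAB : 0 < A * B := lt_of_le_of_lt (sq_nonneg C) hdet
  have hA1 : 0 < A := lt_of_le_of_ne hA0 fun e => by rw [← e] at hAB; simp at hAB
  have hB1 : 0 < B := lt_of_le_of_ne hB0 fun e => by rw [← e] at hAB; simp at hAB
  obtain ⟨r, hr⟩ : ∃ r, r = √B := ⟨_, rfl⟩
  obtain ⟨X, hX⟩ : ∃ X, X = √A := ⟨_, rfl⟩
  have hr0 : 0 < r := hr ▸ Real.sqrt_pos.2 hB1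
  have hX0 : 0 < X := hX ▸ Real.sqrt_pos.2 hA1
  have hrB : B = r ^ 2 := by rw [hr, Real.sq_sqrt hB0]
  have hXA : A = X ^ 2 := by rw [hX, Real.sq_sqrt hA0]
  obtain ⟨β, hβ⟩ : ∃ β, β = C / r := ⟨_, rfl⟩
  have hCβ : C = β * r := by rw [hβ]; field_simp
  have hpos : 0 < A - β ^ 2 := by
    rw [hCβ, hrB] at hdet
    have : 0 < (A - β ^ 2) * r ^ 2 := by nlinarith
    exact pos_of_mul_pos_left this (by positivity)
  obtain ⟨α, hα⟩ : ∃ α, α = √(A - β ^ 2) := ⟨_, rfl⟩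
  have hα0 : 0 < α := hα ▸ Real.sqrt_pos.2 hpos
  have hα2 : α ^ 2 = A - β ^ 2 := by rw [hα, Real.sq_sqrt hpos.le]
  have hlaw := law_eq n x h α β r (by rw [← hA]; linarith) hrB hCβ
  have m1 : Measurable (fun a : Fin n → ℝ => ((∑ i, a i * x i, ∑ i, a i * h i) : ℝ × ℝ)) := by
    fun_prop
  have m2 : Measurable (fun z : ℝ × ℝ => ((α * z.1 + β * z.2, r * z.2) : ℝ × ℝ)) := by fun_prop
  have mF : Measurable (fun p : ℝ × ℝ => p.2 ^ 2 * f (p.1 / p.2)) := by fun_prop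
  have s1 : ∫ a, (∑ i, a i * h i) ^ 2 * f ((∑ i, a i * x i) / (∑ i, a i * h i)) ∂(stdGaussian n)
      = ∫ z : ℝ × ℝ, (r * z.2) ^ 2 * f ((α * z.1 + β * z.2) / (r * z.2))
        ∂((gaussianReal 0 1).prod (gaussianReal 0 1)) := by
    have := congrArg (fun m => ∫ p : ℝ × ℝ, p.2 ^ 2 * f (p.1 / p.2) ∂m) hlaw
    beta_reduce at this
    rw [integral_map m1.aemeasurable mF.aestronglyMeasurable,
      integral_map m2.aemeasurable mF.aestronglyMeasurable] at this
    exact this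
  rw [s1]
  set P := (gaussianReal 0 1).prod (gaussianReal 0 1) with hP
  have mD : Measurable (fun z : ℝ × ℝ => ENNReal.ofReal ((r * z.2) ^ 2)) := by fun_prop
  have mR : Measurable (fun z : ℝ × ℝ => (α * z.1 + β * z.2) / (r * z.2)) := by fun_prop
  have mW : Measurable (fun u : ℝ =>
      ENNReal.ofReal (2 * r ^ 3 / (π * α) / (1 + ((r * u - β) / α) ^ 2) ^ 2)) := by fun_prop
  have hmeas : (P.withDensity (fun z => ENNReal.ofReal ((r * z.2) ^ 2))).map
        (fun z : ℝ × ℝ => (α * z.1 + β * z.2) / (r * z.2))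
      = volume.withDensity (fun u : ℝ =>
      ENNReal.ofReal (2 * r ^ 3 / (π * α) / (1 + ((r * u - β) / α) ^ 2) ^ 2)) := by
    refine Measure.ext_of_lintegral _ fun g hg => ?_
    rw [lintegral_map hg mR, 
      lintegral_withDensity_eq_lintegral_mul _ mD
        (g := fun z : ℝ × ℝ => g ((α * z.1 + β * z.2) / (r * z.2))) (hg.comp mR),
      lintegral_withDensity_eq_lintegral_mul _ mW hg]
    exact main_lint α β r hα0 hr0 g hg
  have h2 := congrArg (fun m => ∫ u, f u ∂m) hmeas
  beta_reduce at h2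
  rw [integral_map mR.aemeasurable hf.aestronglyMeasurable,
    integral_withDensity_eq_integral_toReal_smul mD (by simp),
    integral_withDensity_eq_integral_toReal_smul mW (by simp)] at h2
  simp only [smul_eq_mul, ENNReal.toReal_ofReal (sq_nonneg _)] at h2
  rw [h2]
  refine integral_congr_ae (Filter.Eventually.of_forall fun u => ?_)
  simp only
  rw [ENNReal.toReal_ofReal (by positivity), mul_comm]
  congr 1
  rw [← hr, ← hX, hCβ, hrB]
  have hc : 1 - (β * r / (X * r)) ^ 2 = (α / X) ^ 2 := by
    field_simp
    rw [hα2, hXA]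
  have hpw : ((α / X) ^ 2 : ℝ) ^ ((3 : ℝ) / 2) = (α / X) ^ 3 := by
    rw [← Real.rpow_natCast, ← Real.rpow_mul (by positivity)]
    norm_num
  rw [add_sub_assoc, hc, hpw]
  have hq : (u * (r / X) - β * r / (X * r)) ^ 2 + (α / X) ^ 2
      = α ^ 2 / X ^ 2 * (1 + ((r * u - β) / α) ^ 2) := by
    field_simp
    ring
  rw [hq]
  have : 0 < 1 + ((r * u - β) / α) ^ 2 := by positivity
  generalize 1 + ((r * u - β) / α) ^ 2 = q at *
  field_simp
end

section
/- Let a ~ N(0, I_n) be standard Gaussian, x, z ∈ R^n unit vectors with x ⊥ z, and α, β > 0. Then E[((a^T x)² − (a^T z)²) · 1{|a^T x| > β} · tanh((a^T x)²/α)] ≥ (β e^{−β²/2}/√(2π)) · (1 − e^{−β²/α}(α/(2+α))^{3/2}) > 0. -/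
open MeasureTheory ProbabilityTheory Real

section helpers
open Filter Topology

lemma aux_final (α s : ℝ) (hα : 0 < α) (hs : 0 < s) :
    1 / 2 * (1 - exp (-s) * (α / (2 + α)) ^ ((3 : ℝ) / 2)) ≤
      (1 - exp (-(2 * s))) / (1 + exp (-(2 * s))) +
        2 / (α + 4) * exp (-(2 * s)) * (1 + 1 / (1 + s * (α + 4))) := by
  set v := exp (-(2 * s)) with hv
  set u := exp (-s) with hu
  set c := (α / (2 + α)) ^ ((3 : ℝ) / 2) with hc
  have hvu : v = u * u := by rw [hv, hu, ← exp_add]; ring_nf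
  have hu0 : 0 < u := exp_pos _
  have hv0 : 0 < v := exp_pos _
  have hu1 : u < 1 := by rw [hu, exp_lt_one_iff]; linarith
  have hv1 : v < 1 := by rw [hv, exp_lt_one_iff]; linarith
  have hc0 : 0 < c := by positivity
  rcases le_total (5 / 4) α with h | h
  · have hc2 : c * c = (α / (2 + α)) ^ 3 := by
      rw [hc, ← rpow_add (by positivity), ← rpow_natCast]; norm_num
    have hc3 : α / (α + 4) ≤ c := by
      apply le_of_sq_le_sq _ hc0.le |> fun h => h
      rw [sq c, hc2, div_pow, div_pow, div_le_div_iff₀ (by positivity) (by positivity)]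
      have : 0 ≤ α ^ 2 * (2 * α ^ 2 + 4 * α - 8) := by
        apply mul_nonneg (by positivity); nlinarith
      nlinarith
    have h1 : 2 / (α + 4) * v ≤ 2 / (α + 4) * v * (1 + 1 / (1 + s * (α + 4))) := by
      apply le_mul_of_one_le_right (by positivity)
      have : 0 < 1 / (1 + s * (α + 4)) := by positivity
      linarith
    have h2 : 1 / 2 - v / 2 ≤ (1 - v) / (1 + v) := by
      rw [le_div_iff₀ (by positivity)]; nlinarith
    have h3 : v * (α / (α + 4)) ≤ u * c := by
      apply mul_le_mul _ hc3 (by positivity) hu0.le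
      rw [hvu]; nlinarith
    have h4 : 2 / (α + 4) * v = v / 2 - v * (α / (α + 4)) / 2 := by field_simp; ring
    nlinarith
  · have h0 : 0 < u * c := by positivity
    have hA : 8 / 21 ≤ 2 / (α + 4) := by
      rw [div_le_div_iff₀ (by positivity) (by positivity)]; linarith
    rcases le_total s (2 / 5) with h5 | h5
    · have hB : 10 / 31 ≤ 1 / (1 + s * (α + 4)) := by
        rw [div_le_div_iff₀ (by positivity) (by positivity)]
        nlinarith
      have h1 : 8 / 21 * (1 + 10 / 31) * v ≤ 2 / (α + 4) * v * (1 + 1 / (1 + s * (α + 4))) := by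
        calc _ = 8 / 21 * v * (1 + 10 / 31) := by ring
          _ ≤ _ := by gcongr
      have h2 : 1 / 2 - v / 2 ≤ (1 - v) / (1 + v) := by
        rw [le_div_iff₀ (by positivity)]; nlinarith
      nlinarith
    · have h1 : 8 / 21 * v * (1 + 0) ≤ 2 / (α + 4) * v * (1 + 1 / (1 + s * (α + 4))) := by
        gcongr
        positivity
      have hv2 : v ≤ 1 / 2 := by
        have : 1 + 2 * s + (2 * s) ^ 2 / 2 ≤ exp (2 * s) := quadratic_le_exp_of_nonneg (by linarith)
        rw [hv, exp_neg, inv_le_comm₀ (exp_pos _) (by norm_num)]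
        nlinarith
      have h2 : 1 / 2 - 8 / 21 * v ≤ (1 - v) / (1 + v) := by
        rw [le_div_iff₀ (by positivity)]; nlinarith
      nlinarith

lemma tanh_eq' (s : ℝ) : tanh s = (1 - exp (-(2 * s))) / (1 + exp (-(2 * s))) := by
  rw [tanh_eq, div_eq_div_iff (by positivity) (by positivity)]
  have : exp (-(2*s)) = exp (-s) * exp (-s) := by rw [← exp_add]; ring_nf
  have h2 : exp s * exp (-s) = 1 := by rw [← exp_add]; simp
  rw [this]
  linear_combination (2 * exp (-s)) * h2

noncomputable def auxG (α x : ℝ) : ℝ :=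
  x * exp (-x ^ 2 / 2) * ((1 - exp (-(2 * (x ^ 2 / α)))) / (1 + exp (-(2 * (x ^ 2 / α)))) +
        2 / (α + 4) * exp (-(2 * (x ^ 2 / α))) * (1 + 1 / (1 + x ^ 2 / α * (α + 4))))

lemma auxG_deriv (α x : ℝ) (hα : 0 < α) :
    ∃ d, HasDerivAt (auxG α) d x ∧ -d ≤ exp (-x ^ 2 / 2) * (x ^ 2 - 1) * tanh (x ^ 2 / α) := by
  have hs : HasDerivAt (fun x : ℝ => x ^ 2 / α) (2 * x / α) x := by
    simpa using (hasDerivAt_pow 2 x).div_const α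
  have hv : HasDerivAt (fun x : ℝ => exp (-(2 * (x ^ 2 / α))))
    (exp (-(2 * (x ^ 2 / α))) * (-(2 * (2 * x / α)))) x := (hs.const_mul 2).neg.exp
  have hE : HasDerivAt (fun x : ℝ => exp (-x ^ 2 / 2)) (exp (-x ^ 2 / 2) * (-(2 * x) / 2)) x := by
    simpa using ((hasDerivAt_pow 2 x).neg.div_const 2).exp
  have hB : HasDerivAt (fun x : ℝ => 1 + 1 / (1 + x ^ 2 / α * (α + 4))) _ x :=
    (((hasDerivAt_const x (1:ℝ)).div ((hs.mul_const (α + 4)).const_add 1)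
      (by positivity))).const_add 1
  have hT := (hv.const_sub 1).div (hv.const_add 1) (by positivity)
  have hG := ((hasDerivAt_id x).mul hE).mul (hT.add ((hv.const_mul (2 / (α + 4))).mul hB))
  refine ⟨_, hG, ?_⟩
  rw [tanh_eq']
  simp only [id, Pi.mul_apply, Pi.add_apply, Pi.div_apply]
  have hv0 := exp_pos (-(2 * (x ^ 2 / α)))
  have hv1 : exp (-(2 * (x ^ 2 / α))) ≤ 1 := by
    rw [exp_le_one_iff]; have : 0 ≤ x ^ 2 / α := by positivity
    linarith
  have hE0 := exp_pos (-x ^ 2 / 2)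
  generalize exp (-(2 * (x ^ 2 / α))) = v at *
  generalize exp (-x ^ 2 / 2) = E at *
  have hq : 0 ≤ x ^ 2 / α := by positivity
  -- q = x^2/α
  have key1 : v * (2 * (x ^ 2 / α)) ≤ 8 * (x ^ 2 / α) * v / (1 + v) ^ 2 := by
    rw [le_div_iff₀ (by positivity)]
    have : (1 + v) ^ 2 ≤ 4 := by nlinarith
    calc _ ≤ v * (2 * (x ^ 2 / α)) * 4 := by gcongr
      _ = _ := by ring
  set w := x ^ 2 / α * (α + 4) with hw
  have hw0 : 0 ≤ w := by positivity
  have key2 : (w - 1) * (1 + 1 / (1 + w)) + 2 * w / (1 + w) ^ 2 ≤ w := by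
    rw [← sub_nonneg]
    have : w - ((w - 1) * (1 + 1 / (1 + w)) + 2 * w / (1 + w) ^ 2) = 2 / (1 + w) ^ 2 := by
      field_simp; ring
    rw [this]; positivity
  have key3 : 2 / (α + 4) * v * ((w - 1) * (1 + 1 / (1 + w)) + 2 * w / (1 + w) ^ 2)
     ≤ v * (2 * (x ^ 2 / α)) := by
    calc _ ≤ 2 / (α + 4) * v * w := by gcongr
      _ = _ := by rw [hw]; field_simp
  have hx2 : x ^ 2 = w - 4 * (x ^ 2 / α) := by rw [hw]; field_simp; ring
  have key4 := mul_le_mul_of_nonneg_left (key3.trans key1) hE0.le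
  rw [← sub_nonneg] at key4 ⊢
  refine key4.trans_eq ?_
  have hE' : ∀ B : ℝ, (1 - x ^ 2) * B = (1 - w + 4 * (x ^ 2 / α)) * B := by
    intro B; linear_combination (-B) * hx2
  have hwx : x * (2 * x / α * (α + 4)) = 2 * w := by rw [hw]; ring
  have hv1' : 1 + v ≠ 0 := by positivity
  have e1 : x * ((-(v * -(2 * (2 * x / α))) * (1 + v) - (1 - v) * (v * -(2 * (2 * x / α)))) /
      (1 + v) ^ 2) = 8 * (x ^ 2 / α) * v / (1 + v) ^ 2 := by ring
  have e2 : x * ((0 * (1 + w) - 1 * (2 * x / α * (α + 4))) / (1 + w) ^ 2) =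
      - (2 * w / (1 + w) ^ 2) := by rw [← hwx]; ring
  linear_combination (-E) * e1 - E * (2 / (α + 4) * v) * e2 -
    E * (2 / (α + 4) * v) * hE' (1 + 1 / (1 + w))

lemma auxG_tendsto (α : ℝ) (hα : 0 < α) : Tendsto (auxG α) atTop (𝓝 0) := by
  have h1 : Tendsto (fun x : ℝ => x * exp (-x ^ 2 / 2) * 3) atTop (𝓝 0) := by
    have := (rpow_mul_exp_neg_mul_sq_isLittleO_exp_neg (b := 1 / 2) (by norm_num) 1).trans_tendsto
      (tendsto_exp_atBot.comp (tendsto_id.const_mul_atTop_of_neg (by norm_num : -(1/2 : ℝ) < 0)))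
    have h2 := this.mul_const 3
    rw [zero_mul] at h2
    refine h2.congr fun x => ?_
    rw [rpow_one]; ring_nf
  refine squeeze_zero' ?_ ?_ h1
  · filter_upwards [eventually_ge_atTop 0] with x hx
    have : exp (-(2 * (x ^ 2 / α))) ≤ 1 := by
      rw [exp_le_one_iff]; have : 0 ≤ x ^ 2 / α := by positivity
      linarith
    have : 0 ≤ 1 - exp (-(2 * (x ^ 2 / α))) := by linarith
    unfold auxG; positivity
  · filter_upwards [eventually_ge_atTop 0] with x hx
    have h3 : exp (-(2 * (x ^ 2 / α))) ≤ 1 := by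
      rw [exp_le_one_iff]; have : 0 ≤ x ^ 2 / α := by positivity
      linarith
    have h4 := exp_pos (-(2 * (x ^ 2 / α)))
    unfold auxG
    gcongr
    have h5 : (1 - exp (-(2 * (x ^ 2 / α)))) / (1 + exp (-(2 * (x ^ 2 / α)))) ≤ 1 := by
      rw [div_le_one (by positivity)]; linarith
    have h6 : 2 / (α + 4) ≤ 1 := by rw [div_le_one (by positivity)]; linarith
    have h7 : 1 / (1 + x ^ 2 / α * (α + 4)) ≤ 1 := by
      rw [div_le_one (by positivity)]
      have : 0 ≤ x ^ 2 / α * (α + 4) := by positivity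
      linarith
    have h8 : 2 / (α + 4) * exp (-(2 * (x ^ 2 / α))) * (1 + 1 / (1 + x ^ 2 / α * (α + 4))) ≤
      1 * 1 * (1 + 1) := by gcongr
    linarith

lemma tanh_cont : Continuous Real.tanh := by
  have : Real.tanh = fun x => Real.sinh x / Real.cosh x := by
    ext x; exact Real.tanh_eq_sinh_div_cosh x
  rw [this]
  exact Real.continuous_sinh.div Real.continuous_cosh fun x => (Real.cosh_pos x).ne'

lemma f_integrable (α : ℝ) :
    Integrable (fun x : ℝ => exp (-x ^ 2 / 2) * (x ^ 2 - 1) * tanh (x ^ 2 / α)) := by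
  have h1 : Integrable (fun x : ℝ => exp (-x ^ 2 / 2) * (x ^ 2 - 1)) := by
    have a := integrable_rpow_mul_exp_neg_mul_sq (b := 1 / 2) (by norm_num) (s := 2) (by norm_num)
    have b := integrable_exp_neg_mul_sq (b := 1 / 2) (by norm_num)
    refine (a.sub b).congr (ae_of_all _ fun x => ?_)
    simp only [Pi.sub_apply]
    rw [show (2 : ℝ) = ((2 : ℕ) : ℝ) by norm_num, rpow_natCast]
    push_cast
    ring_nf
  refine h1.mul_bdd (c := 1) ?_ (ae_of_all _ fun x => ?_)
  · have := tanh_cont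
    exact Continuous.aestronglyMeasurable (by fun_prop)
  · rw [norm_eq_abs]; exact (abs_tanh_lt_one _).le

lemma int_lower (α β : ℝ) (hα : 0 < α) :
    auxG α β ≤ ∫ x in Set.Ioi β, exp (-x ^ 2 / 2) * (x ^ 2 - 1) * tanh (x ^ 2 / α) := by
  choose d hd hle using fun x => auxG_deriv α x hα
  have hi := f_integrable α
  have h1 := intervalIntegral_tendsto_integral_Ioi β hi.integrableOn tendsto_id
  have h2 : Tendsto (fun T => auxG α β - auxG α T) atTop (𝓝 (auxG α β - 0)) :=
    (auxG_tendsto α hα).const_sub _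
  rw [sub_zero] at h2
  refine le_of_tendsto_of_tendsto h2 h1 ?_
  filter_upwards [eventually_ge_atTop β] with T hT
  have := intervalIntegral.sub_le_integral_of_hasDeriv_right_of_le (g := fun x => - auxG α x)
    (g' := fun x => - d x) hT
    (fun x _ => (hd x).neg.continuousAt.continuousWithinAt)
    (fun x _ => (hd x).neg.hasDerivWithinAt) hi.integrableOn (fun x _ => hle x)
  simp only [id]
  linarith

lemma gauss_int (α β : ℝ) (hβ : 0 < β) :
    ∫ x, (x ^ 2 - 1) * ((if β < |x| then (1 : ℝ) else 0) * tanh (x ^ 2 / α)) ∂(gaussianReal 0 1) =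
    2 * ((√(2 * π))⁻¹ * ∫ x in Set.Ioi β, exp (-x ^ 2 / 2) * (x ^ 2 - 1) * tanh (x ^ 2 / α)) := by
  rw [integral_gaussianReal_eq_integral_smul one_ne_zero]
  have h1 : (fun x : ℝ => gaussianPDFReal 0 1 x •
      ((x ^ 2 - 1) * ((if β < |x| then (1 : ℝ) else 0) * tanh (x ^ 2 / α)))) = fun x =>
      (fun y => (Set.Ioi β).indicator (fun x => (√(2 * π))⁻¹ *
        (exp (-x ^ 2 / 2) * (x ^ 2 - 1) * tanh (x ^ 2 / α))) y) |x| := by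
    ext x
    simp only [gaussianPDFReal, Set.indicator, Set.mem_Ioi, smul_eq_mul, sq_abs, NNReal.coe_one,
      mul_one, sub_zero]
    split_ifs
    · ring
    · ring
  rw [h1, integral_comp_abs, setIntegral_indicator measurableSet_Ioi,
    Set.Ioi_inter_Ioi, sup_eq_right.2 hβ.le, integral_const_mul]

lemma reduce (n : ℕ) (x z : Fin n → ℝ)
    (hx : ∑ i, x i ^ 2 = 1) (hz : ∑ i, z i ^ 2 = 1) (hxz : ∑ i, x i * z i = 0)
    (g : ℝ → ℝ) (hg : Measurable g) (hb : ∀ t, |g t| ≤ 1) :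
    ∫ a, ((∑ i, a i * x i) ^ 2 - (∑ i, a i * z i) ^ 2) * g (∑ i, a i * x i)
      ∂(Measure.pi fun _ : Fin n => gaussianReal 0 1) =
    ∫ t, (t ^ 2 - 1) * g t ∂(gaussianReal 0 1) := by
  set P := Measure.pi fun _ : Fin n => gaussianReal 0 1 with hP
  have hind : iIndepFun (fun (i : Fin n) (ω : Fin n → ℝ) => ω i) P :=
    iIndepFun_pi (X := fun _ => id) (fun _ => aemeasurable_id)
  have hlaw : ∀ i, HasLaw (fun ω : Fin n → ℝ => ω i) (gaussianReal 0 1) P := fun i =>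
    ⟨(measurable_pi_apply i).aemeasurable, (measurePreserving_eval _ i).map_eq⟩
  have hG : HasGaussianLaw (fun ω : Fin n → ℝ => fun i => ω i) P :=
    hind.hasGaussianLaw fun i => (hlaw i).hasGaussianLaw
  have hL2 : ∀ i, MemLp (fun ω : Fin n → ℝ => ω i) 2 P := fun i =>
    (hlaw i).hasGaussianLaw.memLp_two
  have hcov : ∀ y w : Fin n → ℝ, cov[fun a => ∑ i, a i * y i, fun a => ∑ i, a i * w i; P] =
      ∑ i, y i * w i := by
    intro y w
    rw [covariance_fun_sum_fun_sum (fun i => (hL2 i).mul_const _) (fun i => (hL2 i).mul_const _)]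
    refine Finset.sum_congr rfl fun i _ => ?_
    rw [Finset.sum_eq_single i]
    · rw [covariance_mul_const_left, covariance_mul_const_right,
        covariance_self (hlaw i).aemeasurable, (hlaw i).variance_eq]
      simp; ring
    · intro j _ hj
      rw [covariance_mul_const_left, covariance_mul_const_right,
        (hind.indepFun hj.symm).covariance_eq_zero (hL2 i) (hL2 j)]
      simp
    · simp
  let Lx : ∀ y : Fin n → ℝ, (Fin n → ℝ) →L[ℝ] ℝ := fun y =>
    ∑ i, (y i) • (ContinuousLinearMap.proj i : (Fin n → ℝ) →L[ℝ] ℝ)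
  have hLx : ∀ y a, Lx y a = ∑ i, a i * y i := by
    intro y a; simp [Lx, mul_comm]
  have hXZ : HasGaussianLaw (fun a : Fin n → ℝ => (∑ i, a i * x i, ∑ i, a i * z i)) P := by
    have := hG.map_fun ((Lx x).prod (Lx z))
    simpa [hLx] using this
  have hI : IndepFun (fun a : Fin n → ℝ => ∑ i, a i * x i) (fun a => ∑ i, a i * z i) P :=
    hXZ.indepFun_of_covariance_eq_zero (by rw [hcov, hxz])
  have hmap : ∀ y : Fin n → ℝ, ∑ i, y i ^ 2 = 1 →
      P.map (fun a => ∑ i, a i * y i) = gaussianReal 0 1 := by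
    intro y hy
    have h1 : HasGaussianLaw (fun a : Fin n → ℝ => ∑ i, a i * y i) P := by
      have := hG.map_fun (Lx y)
      simpa [hLx] using this
    rw [h1.map_eq_gaussianReal, ← covariance_self h1.aemeasurable, hcov]
    have : ∫ a : Fin n → ℝ, ∑ i, a i * y i ∂P = 0 := by
      rw [integral_finsetSum _ fun i _ => ((hlaw i).hasGaussianLaw.integrable.mul_const _)]
      refine Finset.sum_eq_zero fun i _ => ?_
      rw [integral_mul_const, (hlaw i).integral_eq]; simp
    rw [this]
    simp [← sq, hy]
  have mx : ∀ y : Fin n → ℝ, Measurable (fun a : Fin n → ℝ => ∑ i, a i * y i) := by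
    intro y; fun_prop
  have hsq : Integrable (fun t : ℝ => t ^ 2) (gaussianReal 0 1) :=
    (memLp_id_gaussianReal 2).integrable_sq
  have hgi : Integrable g (gaussianReal 0 1) := by
    refine Integrable.of_bound hg.aestronglyMeasurable 1 (ae_of_all _ fun t => hb t)
  have hsg : Integrable (fun t : ℝ => t ^ 2 * g t) (gaussianReal 0 1) :=
    hsq.mul_bdd (c := 1) hg.aestronglyMeasurable (ae_of_all _ fun t => hb t)
  have hs1 : ∫ t, t ^ 2 ∂(gaussianReal 0 1) = 1 := by
    have h := variance_fun_id_gaussianReal (μ := 0) (v := 1)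
    rw [variance_of_integral_eq_zero aemeasurable_id' (by simp)] at h
    simpa using h
  have tr : ∀ y : Fin n → ℝ, ∑ i, y i ^ 2 = 1 → ∀ f : ℝ → ℝ, Measurable f →
      ∫ a, f (∑ i, a i * y i) ∂P = ∫ t, f t ∂(gaussianReal 0 1) := by
    intro y hy f hf
    rw [← hmap y hy, integral_map (mx y).aemeasurable hf.aestronglyMeasurable]
  have tri : ∀ y : Fin n → ℝ, ∑ i, y i ^ 2 = 1 → ∀ f : ℝ → ℝ, Measurable f →
      Integrable f (gaussianReal 0 1) → Integrable (fun a => f (∑ i, a i * y i)) P := by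
    intro y hy f hf hfi
    rw [← hmap y hy] at hfi
    exact hfi.comp_measurable (mx y)
  have mg2 : Measurable (fun t : ℝ => t ^ 2 * g t) := by fun_prop
  have m2 : Measurable (fun t : ℝ => t ^ 2) := by fun_prop
  have hI2 : IndepFun (fun a : Fin n → ℝ => (∑ i, a i * z i) ^ 2) (fun a => g (∑ i, a i * x i)) P :=
    hI.symm.comp m2 hg
  have i2 : Integrable (fun a : Fin n → ℝ => (∑ i, a i * z i) ^ 2 * g (∑ i, a i * x i)) P :=
    hI2.integrable_mul (tri z hz _ m2 hsq) (tri x hx _ hg hgi)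
  calc _ = ∫ a, ((∑ i, a i * x i) ^ 2 * g (∑ i, a i * x i) -
          (∑ i, a i * z i) ^ 2 * g (∑ i, a i * x i)) ∂P := by simp only [sub_mul]
    _ = ∫ a, (∑ i, a i * x i) ^ 2 * g (∑ i, a i * x i) ∂P -
          ∫ a, (∑ i, a i * z i) ^ 2 * g (∑ i, a i * x i) ∂P :=
        integral_sub (tri x hx _ mg2 hsg) i2
    _ = ∫ t, t ^ 2 * g t ∂(gaussianReal 0 1) - 1 * ∫ t, g t ∂(gaussianReal 0 1) := by
        rw [hI2.integral_fun_mul_eq_mul_integral (tri z hz _ m2 hsq).aestronglyMeasurable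
          (tri x hx _ hg hgi).aestronglyMeasurable, tr x hx _ mg2, tr z hz _ m2, tr x hx _ hg, hs1]
    _ = _ := by
        rw [one_mul, ← integral_sub hsg hgi]; simp only [sub_mul, one_mul]

end helpers

/-- For `a ~ N(0, I_n)`, orthonormal `x, z ∈ ℝⁿ` and `α, β > 0`,
`E[((aᵀx)² − (aᵀz)²)·1{|aᵀx| > β}·tanh((aᵀx)²/α)]
  ≥ (β e^{−β²/2}/√(2π))(1 − e^{−β²/α}(α/(2+α))^{3/2}) > 0`. -/
theorem eigengap_expectation_lower_bound (n : ℕ) (x z : Fin n → ℝ)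
    (hx : ∑ i, x i ^ 2 = 1) (hz : ∑ i, z i ^ 2 = 1) (hxz : ∑ i, x i * z i = 0)
    (α β : ℝ) (hα : 0 < α) (hβ : 0 < β) :
    (∫ a, ((∑ i, a i * x i) ^ 2 - (∑ i, a i * z i) ^ 2) *
          (if β < |∑ i, a i * x i| then (1 : ℝ) else 0) *
          Real.tanh ((∑ i, a i * x i) ^ 2 / α) ∂(stdGaussian n)
        ≥ (β * Real.exp (-β ^ 2 / 2) / Real.sqrt (2 * π)) *
            (1 - Real.exp (-β ^ 2 / α) * (α / (2 + α)) ^ ((3 : ℝ) / 2))) ∧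
    0 < (β * Real.exp (-β ^ 2 / 2) / Real.sqrt (2 * π)) *
          (1 - Real.exp (-β ^ 2 / α) * (α / (2 + α)) ^ ((3 : ℝ) / 2)) := by
  have hc1 : (α / (2 + α)) ^ ((3 : ℝ) / 2) ≤ 1 := by
    apply rpow_le_one (by positivity) _ (by norm_num)
    rw [div_le_one (by positivity)]; linarith
  have hc0 : 0 < (α / (2 + α)) ^ ((3 : ℝ) / 2) := by positivity
  have hs : 0 < β ^ 2 / α := by positivity
  have he : exp (-β ^ 2 / α) < 1 := by
    rw [exp_lt_one_iff, neg_div]; linarith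
  have he0 := exp_pos (-β ^ 2 / α)
  refine ⟨?_, mul_pos (by positivity) (by nlinarith)⟩
  have hr := reduce n x z hx hz hxz
    (fun t => (if β < |t| then (1 : ℝ) else 0) * tanh (t ^ 2 / α)) (by
      have h1 := tanh_cont.measurable
      refine Measurable.mul (Measurable.ite ?_ measurable_const measurable_const)
        (h1.comp (by fun_prop))
      exact measurableSet_lt measurable_const (by fun_prop)) (by
      intro t
      have := (abs_tanh_lt_one (t ^ 2 / α)).le
      split_ifs
      · simpa using this
      · simp)
  rw [gauss_int α β hβ] at hr
  unfold _root_.stdGaussian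
  simp only [mul_assoc] at hr ⊢
  rw [hr]
  have h1 := int_lower α β hα
  have h2 := aux_final α (β ^ 2 / α) hα hs
  simp only [mul_assoc] at h1
  have h3 : β * exp (-β ^ 2 / 2) *
      (1 / 2 * (1 - exp (-β ^ 2 / α) * (α / (2 + α)) ^ ((3 : ℝ) / 2))) ≤ auxG α β := by
    rw [neg_div α (β ^ 2)]
    exact mul_le_mul_of_nonneg_left h2 (by positivity)
  have h4 := mul_le_mul_of_nonneg_left (h3.trans h1)
    (by positivity : 0 ≤ 2 * (√(2 * π))⁻¹)
  rw [ge_iff_le, ← mul_assoc 2 (√(2 * π))⁻¹]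
  refine le_trans (le_of_eq ?_) h4
  rw [div_eq_mul_inv]; ring
end

section
/- Let x ∈ R^n be a unit vector. Then x is a leading eigenvector of the matrix M = E[a a^T · 1{|a^T x| > β} · tanh((a^T x)²/α)] for a ~ N(0, I_n), and the eigengap between the eigenvalue at x and any orthogonal direction is at least (β e^{−β²/2}/√(2π))(1 − e^{−β²/α}(α/(2+α))^{3/2}). -/
open MeasureTheory ProbabilityTheory Real Matrix

namespace TanhAux

/-- The linear functional `a ↦ ∑ k, a k * u k`. -/
def lin {n : ℕ} (u : Fin n → ℝ) (a : Fin n → ℝ) : ℝ := ∑ k, a k * u k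

lemma measurable_lin {n : ℕ} (u : Fin n → ℝ) : Measurable (lin u) := by
  unfold lin; fun_prop

lemma prob (n : ℕ) : IsProbabilityMeasure (_root_.stdGaussian n) := by
  unfold _root_.stdGaussian; infer_instance

lemma indep_coord (n : ℕ) :
    iIndepFun (fun (i : Fin n) (a : Fin n → ℝ) => a i) (_root_.stdGaussian n) := by
  unfold _root_.stdGaussian
  exact iIndepFun_pi (μ := fun _ : Fin n => gaussianReal 0 1) (X := fun _ => (id : ℝ → ℝ))
    (fun i => aemeasurable_id)

lemma law_coord (n : ℕ) (i : Fin n) :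
    (_root_.stdGaussian n).map (fun a => a i) = gaussianReal 0 1 := by
  unfold _root_.stdGaussian
  exact (measurePreserving_eval (fun _ : Fin n => gaussianReal 0 1) i).map_eq

lemma gauss_id (n : ℕ) : HasGaussianLaw (fun a : Fin n → ℝ => fun i => a i) (_root_.stdGaussian n) := by
  refine iIndepFun.hasGaussianLaw (fun i => ⟨?_⟩) (indep_coord n)
  rw [law_coord]; infer_instance

lemma gauss_lin {n : ℕ} (u : Fin n → ℝ) : HasGaussianLaw (lin u) (_root_.stdGaussian n) := by
  have h := (gauss_id n).map_fun (∑ k, (u k) • (ContinuousLinearMap.proj (R := ℝ) (φ := fun _ : Fin n => ℝ) k))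
  refine h.congr (ae_of_all _ fun a => ?_)
  simp [lin, mul_comm]

lemma memLp_coord {n : ℕ} (i : Fin n) : MemLp (fun a : Fin n → ℝ => a i) 2 (_root_.stdGaussian n) :=
  ((gauss_id n).eval i).memLp_two

lemma int_coord {n : ℕ} (i : Fin n) : ∫ a, a i ∂(_root_.stdGaussian n) = 0 := by
  have h := integral_map (μ := _root_.stdGaussian n) (φ := fun a => a i) (f := fun t : ℝ => t)
    (measurable_pi_apply i).aemeasurable (by fun_prop)
  rw [← h, law_coord, integral_id_gaussianReal]

lemma int_coord_mul {n : ℕ} (i j : Fin n) :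
    ∫ a, a i * a j ∂(_root_.stdGaussian n) = if i = j then 1 else 0 := by
  have := prob n
  split_ifs with h
  · subst h
    have h := integral_map (μ := _root_.stdGaussian n) (φ := fun a => a i) (f := fun t : ℝ => t * t)
      (measurable_pi_apply i).aemeasurable (by fun_prop)
    rw [← h, law_coord]
    have h2 := variance_id_gaussianReal (μ := 0) (v := 1)
    rw [variance_of_integral_eq_zero (by fun_prop) (by simp [integral_id_gaussianReal])] at h2
    simpa [sq] using h2
  · have := ((indep_coord n).indepFun h).integral_fun_mul_eq_mul_integral
      (measurable_pi_apply i).aestronglyMeasurable (measurable_pi_apply j).aestronglyMeasurable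
    rw [this]; simp [int_coord]

lemma int_lin {n : ℕ} (u : Fin n → ℝ) : ∫ a, lin u a ∂(_root_.stdGaussian n) = 0 := by
  have := prob n
  unfold lin
  rw [integral_finsetSum]
  · simp [integral_mul_const, int_coord]
  · intro i _
    exact ((memLp_coord i).integrable (by norm_num)).mul_const _

lemma int_lin_mul {n : ℕ} (u v : Fin n → ℝ) :
    ∫ a, lin u a * lin v a ∂(_root_.stdGaussian n) = ∑ k, u k * v k := by
  have hI : ∀ i j : Fin n, Integrable (fun a : Fin n → ℝ => a i * u i * (a j * v j)) (_root_.stdGaussian n) := by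
    intro i j
    have := ((memLp_coord i).integrable_mul (memLp_coord j)).mul_const (u i * v j)
    refine this.congr (ae_of_all _ fun a => ?_)
    simp only [Pi.mul_apply]; ring
  unfold lin
  simp_rw [Finset.sum_mul_sum]
  rw [integral_finsetSum _ (fun i _ => integrable_finsetSum _ fun j _ => hI i j)]
  refine Finset.sum_congr rfl fun i _ => ?_
  rw [integral_finsetSum _ (fun j _ => hI i j)]
  have : ∀ j, ∫ a, a i * u i * (a j * v j) ∂(_root_.stdGaussian n) = (if i = j then 1 else 0) * (u i * v j) := by
    intro j
    rw [← int_coord_mul, ← integral_mul_const]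
    congr 1; ext a; ring
  simp [this]

lemma indep_lin {n : ℕ} (x u v : Fin n → ℝ) (hu : ∑ k, u k * x k = 0) (hv : ∑ k, v k * x k = 0) :
    IndepFun (fun a => fun b : Bool => lin (bif b then u else v) a) (fun a => fun _ : Unit => lin x a)
      (_root_.stdGaussian n) := by
  have := prob n
  refine HasGaussianLaw.indepFun_of_covariance_eval (X := fun b a => lin (bif b then u else v) a)
    (Y := fun _ a => lin x a) ?_ ?_
  · let L : (Fin n → ℝ) → ((Fin n → ℝ) →L[ℝ] ℝ) := fun u =>
      ∑ k, (u k) • (ContinuousLinearMap.proj (R := ℝ) (φ := fun _ : Fin n => ℝ) k)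
    have h := (gauss_id n).map_fun ((ContinuousLinearMap.pi fun b : Bool => L (bif b then u else v)).prod
      (ContinuousLinearMap.pi fun _ : Unit => L x))
    refine h.congr (ae_of_all _ fun a => ?_)
    simp only [ContinuousLinearMap.prod_apply, Prod.mk.injEq]
    constructor
    · ext b; simp [lin, L, mul_comm]
    · ext b; simp [lin, L, mul_comm]
  · intro b _
    rw [covariance_eq_sub (gauss_lin _).memLp_two (gauss_lin _).memLp_two]
    simp only [Pi.mul_apply, int_lin_mul, int_lin]
    cases b <;> simp [hu, hv]

lemma law_lin {n : ℕ} (x : Fin n → ℝ) (hx : ∑ i, x i ^ 2 = 1) :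
    (_root_.stdGaussian n).map (lin x) = gaussianReal 0 1 := by
  rw [(gauss_lin x).map_eq_gaussianReal, int_lin, variance_of_integral_eq_zero (measurable_lin x).aemeasurable (int_lin x)]
  have := int_lin_mul x x
  simp_rw [← sq] at this
  simp [this, hx]

section
variable {n : ℕ} (x u v : Fin n → ℝ) (g : ℝ → ℝ)

lemma int_A (hu : ∑ k, u k * x k = 0) (hv : ∑ k, v k * x k = 0) (hg : Measurable g) :
    ∫ a, (lin u a * lin v a) * g (lin x a) ∂(_root_.stdGaussian n) =
      (∑ k, u k * v k) * ∫ a, g (lin x a) ∂(_root_.stdGaussian n) := by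
  have h := (indep_lin x u v hu hv).comp (φ := fun w : Bool → ℝ => w true * w false)
    (ψ := fun w : Unit → ℝ => g (w ())) (by fun_prop) (by fun_prop)
  have m := measurable_lin u
  have m2 := measurable_lin v
  have m3 := measurable_lin x
  rw [← int_lin_mul]
  exact h.integral_fun_mul_eq_mul_integral (by simp [Function.comp_def]; fun_prop)
    (Measurable.aestronglyMeasurable (by simp only [Function.comp_def]; fun_prop))

lemma int_B (hu : ∑ k, u k * x k = 0) (hg : Measurable g) :
    ∫ a, lin u a * (lin x a * g (lin x a)) ∂(_root_.stdGaussian n) = 0 := by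
  have hm : Measurable (fun w : Bool → ℝ => w true) := measurable_pi_apply true
  have h := (indep_lin x u u hu hu).comp (φ := fun w : Bool → ℝ => w true)
    (ψ := fun w : Unit → ℝ => w () * g (w ())) hm (by fun_prop)
  have m := measurable_lin u
  have m3 := measurable_lin x
  have := h.integral_fun_mul_eq_mul_integral (by simp [Function.comp_def]; fun_prop)
    (Measurable.aestronglyMeasurable (by simp only [Function.comp_def]; fun_prop))
  simp only [Function.comp_def, cond_true, int_lin, zero_mul] at this
  exact this

lemma integrable_lin_g (hg : Measurable g) (hb : ∀ t, |g t| ≤ 1) :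
    Integrable (fun a => lin u a * lin v a * g (lin x a)) (_root_.stdGaussian n) := by
  have h1 := (gauss_lin u).memLp_two.integrable_mul (gauss_lin v).memLp_two
  exact h1.mul_bdd (c := 1) (hg.comp (measurable_lin x)).aestronglyMeasurable
    (ae_of_all _ fun a => hb _)

lemma entry (hx : ∑ i, x i ^ 2 = 1) (hg : Measurable g) (hb : ∀ t, |g t| ≤ 1) (i j : Fin n) :
    ∫ a, a i * a j * g (lin x a) ∂(_root_.stdGaussian n) =
      x i * x j * ∫ t, t ^ 2 * g t ∂(gaussianReal 0 1) +
      ((if i = j then 1 else 0) - x i * x j) * ∫ t, g t ∂(gaussianReal 0 1) := by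
  let e : Fin n → Fin n → ℝ := fun i k => (if k = i then 1 else 0) - x i * x k
  have he : ∀ i, ∑ k, e i k * x k = 0 := by
    intro i
    simp only [e, sub_mul, Finset.sum_sub_distrib, mul_assoc, ← Finset.mul_sum, ← sq, hx]
    simp
  have hee : ∑ k, e i k * e j k = (if i = j then 1 else 0) - x i * x j := by
    have : ∀ k, e i k * e j k = (if k = j then e i k else 0) - x j * (e i k * x k) := by
      intro k; simp only [e]; split_ifs <;> ring
    simp only [this, Finset.sum_sub_distrib, ← Finset.mul_sum, he]
    simp [e, eq_comm]
  have hle : ∀ i a, lin (e i) a = a i - x i * lin x a := by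
    intro i a
    simp only [lin, e, mul_sub, Finset.sum_sub_distrib, Finset.mul_sum]
    simp [mul_left_comm]
  have m3 := measurable_lin x
  have hl1 : ∫ t, t ^ 2 * g t ∂(gaussianReal 0 1) = ∫ a, lin x a * lin x a * g (lin x a) ∂(_root_.stdGaussian n) := by
    rw [← law_lin x hx, integral_map (by fun_prop) (by fun_prop)]
    simp only [sq]
  have hl2 : ∫ t, g t ∂(gaussianReal 0 1) = ∫ a, g (lin x a) ∂(_root_.stdGaussian n) := by
    rw [← law_lin x hx, integral_map (by fun_prop) (by fun_prop)]
  rw [hl1, hl2, ← hee, ← int_A x _ _ g (he i) (he j) hg, ← integral_const_mul]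
  have B1 := int_B x (e i) g (he i) hg
  have B2 := int_B x (e j) g (he j) hg
  have I1 := integrable_lin_g x x x g hg hb
  have I2 := integrable_lin_g x (e i) (e j) g hg hb
  have I3 := integrable_lin_g x (e i) x g hg hb
  have I4 := integrable_lin_g x (e j) x g hg hb
  simp only [← mul_assoc] at B1 B2
  have : ∀ a : Fin n → ℝ, a i * a j * g (lin x a) = x i * x j * (lin x a * lin x a * g (lin x a)) +
      lin (e i) a * lin (e j) a * g (lin x a) + (x j * (lin (e i) a * lin x a * g (lin x a)) +
      x i * (lin (e j) a * lin x a * g (lin x a))) := by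
    intro a; rw [hle, hle]; ring
  simp_rw [this]
  have J1 := (I1.const_mul (x i * x j)).add I2
  have J2 := (I3.const_mul (x j)).add (I4.const_mul (x i))
  simp only [Pi.add_def] at J1 J2
  rw [integral_add J1 J2,
    integral_add (I1.const_mul _) I2, integral_add (I3.const_mul _) (I4.const_mul _),
    integral_const_mul (x j), integral_const_mul (x i), B1, B2]
  ring

end
end TanhAux

namespace TanhAux

lemma integrable_K {b : ℝ} (hb : 0 < b) :
    Integrable (fun t : ℝ => (2 * b * t ^ 2 - 1) * Real.exp (-b * t ^ 2)) := by
  have h1 := integrable_rpow_mul_exp_neg_mul_sq hb (s := 2) (by norm_num)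
  have h2 := (h1.const_mul (2 * b)).sub (integrable_exp_neg_mul_sq hb)
  refine h2.congr (ae_of_all _ fun t => ?_)
  simp only [Pi.sub_apply, Real.rpow_two]
  ring

lemma tail_Ioi {b : ℝ} (hb : 0 < b) (β : ℝ) :
    ∫ t in Set.Ioi β, (2 * b * t ^ 2 - 1) * Real.exp (-b * t ^ 2) = β * Real.exp (-b * β ^ 2) := by
  have hd : ∀ t : ℝ, HasDerivAt (fun t : ℝ => -(t * Real.exp (-b * t ^ 2)))
      ((2 * b * t ^ 2 - 1) * Real.exp (-b * t ^ 2)) t := by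
    intro t
    have h0 : HasDerivAt (fun t : ℝ => -b * t ^ 2) (-b * (2 * t)) t := by
      simpa using (hasDerivAt_pow 2 t).const_mul (-b)
    have h1 := ((hasDerivAt_id t).mul h0.exp).neg
    refine h1.congr_deriv ?_
    simp only [id]; ring
  have hi := (integrable_K hb).integrableOn (s := Set.Ioi β)
  have ht := tendsto_zero_of_hasDerivAt_of_integrableOn_Ioi (a := β) (fun t _ => hd t) hi
    (integrable_mul_exp_neg_mul_sq hb).neg.integrableOn
  rw [integral_Ioi_of_hasDerivAt_of_tendsto' (fun t _ => hd t) hi ht]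
  ring

lemma tail_abs {b : ℝ} (hb : 0 < b) {β : ℝ} (hβ : 0 < β) :
    ∫ t : ℝ, (if β < |t| then (1 : ℝ) else 0) * ((2 * b * t ^ 2 - 1) * Real.exp (-b * t ^ 2)) =
      2 * (β * Real.exp (-b * β ^ 2)) := by
  have h := integral_comp_abs (f := fun t : ℝ =>
    (if β < t then (1 : ℝ) else 0) * ((2 * b * t ^ 2 - 1) * Real.exp (-b * t ^ 2)))
  simp only [sq_abs] at h
  rw [h, ← tail_Ioi hb]
  congr 1
  rw [← integral_indicator measurableSet_Ioi, ← integral_indicator measurableSet_Ioi]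
  congr 1; ext t
  by_cases h1 : β < t
  · have : 0 < t := hβ.trans h1
    simp [Set.indicator, h1, this]
  · simp [Set.indicator, h1]

lemma integrable_tail {b : ℝ} (hb : 0 < b) (β : ℝ) :
    Integrable (fun t : ℝ => (if β < |t| then (1 : ℝ) else 0) *
      ((2 * b * t ^ 2 - 1) * Real.exp (-b * t ^ 2))) := by
  refine (integrable_K hb).bdd_mul (c := 1) ?_ ?_
  · refine Measurable.aestronglyMeasurable (Measurable.ite ?_ measurable_const measurable_const)
    exact measurableSet_lt measurable_const (by fun_prop)
  · refine ae_of_all _ fun t => ?_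
    split_ifs <;> simp

/-- the weight -/
noncomputable def wt (α β t : ℝ) : ℝ := (if β < |t| then (1 : ℝ) else 0) * Real.tanh (t ^ 2 / α)

lemma tanh_eq' (y : ℝ) : Real.tanh y = 1 - Real.exp (-y) * (Real.cosh y)⁻¹ := by
  have := Real.cosh_pos y
  rw [Real.tanh_eq_sinh_div_cosh]
  field_simp
  rw [Real.sinh_eq, Real.cosh_eq]; ring

lemma wt_meas (α β : ℝ) : Measurable (wt α β) := by
  have h : Measurable fun t : ℝ => Real.tanh (t ^ 2 / α) := by
    have hc := Real.continuous_cosh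
    simp only [Real.tanh_eq_sinh_div_cosh]
    exact (Real.measurable_sinh.comp (by fun_prop)).div (Real.measurable_cosh.comp (by fun_prop))
  refine Measurable.mul (Measurable.ite ?_ measurable_const measurable_const) h
  exact measurableSet_lt measurable_const (by fun_prop)

lemma wt_bd (α β t : ℝ) : |wt α β t| ≤ 1 := by
  unfold wt
  have := (Real.abs_tanh_lt_one (t ^ 2 / α)).le
  split_ifs <;> simp [this]

lemma pointwise {α t s2 : ℝ} (hα : 0 < α) (hs : 0 < s2) (hs1 : s2 ≤ 1) :
    (t ^ 2 - 1) - (Real.cosh (s2 / α))⁻¹ * ((t ^ 2 - s2) * Real.exp (-(t ^ 2 / α))) ≤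
      (t ^ 2 - 1) * Real.tanh (t ^ 2 / α) := by
  have hc := Real.cosh_pos (t ^ 2 / α)
  have hE := Real.exp_pos (-(t ^ 2 / α))
  rw [tanh_eq']
  have hr : 0 < (Real.cosh (t ^ 2 / α))⁻¹ := by positivity
  have key : (t ^ 2 - s2) * (Real.cosh (t ^ 2 / α))⁻¹ ≤ (t ^ 2 - s2) * (Real.cosh (s2 / α))⁻¹ := by
    rcases le_total (t ^ 2) s2 with h | h
    · refine mul_le_mul_of_nonpos_left ?_ (by linarith)
      refine inv_anti₀ hc (Real.cosh_le_cosh.2 ?_)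
      rw [abs_of_nonneg (by positivity), abs_of_nonneg (by positivity)]
      gcongr
    · refine mul_le_mul_of_nonneg_left ?_ (by linarith)
      refine inv_anti₀ (Real.cosh_pos _) (Real.cosh_le_cosh.2 ?_)
      rw [abs_of_nonneg (by positivity), abs_of_nonneg (by positivity)]
      gcongr
  have k2 : (t ^ 2 - 1) * (Real.cosh (t ^ 2 / α))⁻¹ ≤ (t ^ 2 - s2) * (Real.cosh (s2 / α))⁻¹ := by
    refine le_trans ?_ key
    gcongr
  have k3 := mul_le_mul_of_nonneg_left k2 hE.le
  linarith

lemma final_ineq {s q : ℝ} (hs : 0 ≤ s) (hs1 : s ≤ 1) (hq : 0 ≤ q) (hq1 : q ≤ 1) :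
    1 - q * s ^ 3 ≤ 2 * (1 - s ^ 2 * q) := by
  have h1 : 0 ≤ (1 - s) * (1 + s * (1 - s)) :=
    mul_nonneg (by linarith) (by nlinarith)
  nlinarith [mul_nonneg hq h1]

lemma gap (α β : ℝ) (hα : 0 < α) (hβ : 0 < β) :
    (β * Real.exp (-β ^ 2 / 2) / Real.sqrt (2 * π)) *
        (1 - Real.exp (-β ^ 2 / α) * (α / (2 + α)) ^ ((3 : ℝ) / 2)) ≤
    (∫ t, t ^ 2 * wt α β t ∂(gaussianReal 0 1)) - ∫ t, wt α β t ∂(gaussianReal 0 1) := by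
  set s2 : ℝ := α / (2 + α) with hs2
  have hs : 0 < s2 := by positivity
  have hs1 : s2 ≤ 1 := by rw [hs2, div_le_one (by positivity)]; linarith
  set b : ℝ := 1 / 2 + 1 / α with hbdef
  have hb : 0 < b := by positivity
  have hbs : 2 * b * s2 = 1 := by rw [hbdef, hs2]; field_simp; ring
  set ρ : ℝ := (Real.cosh (s2 / α))⁻¹ with hρ
  have hρ1 : ρ ≤ 1 := inv_le_one_of_one_le₀ (Real.one_le_cosh _)
  have hI2 : Integrable (fun t : ℝ => wt α β t) (gaussianReal 0 1) :=
    (integrable_const (1 : ℝ)).mono' (wt_meas α β).aestronglyMeasurable (ae_of_all _ (wt_bd α β))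
  have hsq : Integrable (fun t : ℝ => t ^ 2) (gaussianReal 0 1) := by
    have := (memLp_id_gaussianReal (μ := 0) (v := 1) 2)
    exact MemLp.integrable_sq this
  have hI1 : Integrable (fun t : ℝ => t ^ 2 * wt α β t) (gaussianReal 0 1) :=
    hsq.mul_bdd (c := 1) (wt_meas α β).aestronglyMeasurable (ae_of_all _ (wt_bd α β))
  have hI3 := hI1.sub hI2
  rw [← integral_sub hI1 hI2]
  rw [integral_gaussianReal_eq_integral_smul (by norm_num)]
  have hI4 : Integrable (fun t => gaussianPDFReal 0 1 t • (t ^ 2 * wt α β t - wt α β t)) := by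
    rw [gaussianReal_of_var_ne_zero _ (by norm_num)] at hI3
    have := (integrable_withDensity_iff_integrable_smul' (measurable_gaussianPDF 0 1)
      (ae_of_all _ fun _ => by simp [gaussianPDF])).1 hI3
    refine this.congr (ae_of_all _ fun t => ?_)
    simp [gaussianPDF, gaussianPDFReal_nonneg]
  set c : ℝ := (Real.sqrt (2 * π))⁻¹ with hc
  have hcpos : 0 < c := by positivity
  have hlow := ((integrable_tail (b := 1 / 2) (by norm_num) β).sub
    ((integrable_tail hb β).const_mul (ρ * s2))).const_mul c
  have hval : ∫ t : ℝ, c * ((if β < |t| then (1 : ℝ) else 0) *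
      ((2 * (1 / 2) * t ^ 2 - 1) * Real.exp (-(1 / 2) * t ^ 2)) -
      (ρ * s2) * ((if β < |t| then (1 : ℝ) else 0) * ((2 * b * t ^ 2 - 1) * Real.exp (-b * t ^ 2))))
      = c * (2 * (β * Real.exp (-(1 / 2) * β ^ 2)) - (ρ * s2) * (2 * (β * Real.exp (-b * β ^ 2)))) := by
    rw [integral_const_mul, integral_sub (integrable_tail (by norm_num) β)
      ((integrable_tail hb β).const_mul (ρ * s2)), integral_const_mul, tail_abs hb hβ,
      tail_abs (by norm_num) hβ]
  have hmono := integral_mono hlow hI4 (fun t => by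
    have hpdf : gaussianPDFReal 0 1 t = c * Real.exp (-(1 / 2) * t ^ 2) := by
      simp [gaussianPDFReal, hc]; ring_nf; simp
    simp only [Pi.sub_apply, smul_eq_mul, hpdf, wt]
    have hexp : Real.exp (-b * t ^ 2) = Real.exp (-(1 / 2) * t ^ 2) * Real.exp (-(t ^ 2 / α)) := by
      rw [← Real.exp_add, hbdef]; congr 1; ring
    split_ifs with h
    · have hp := pointwise (t := t) hα hs hs1
      rw [hexp]
      have hE : 0 < c * Real.exp (-(1 / 2) * t ^ 2) := by positivity
      have := mul_le_mul_of_nonneg_left hp hE.le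
      rw [← hρ] at this
      refine le_trans (le_of_eq ?_) (this.trans (le_of_eq (by ring)))
      linear_combination (-c * ρ * t ^ 2 * (Real.exp (-(1 / 2) * t ^ 2) * Real.exp (-(t ^ 2 / α)))) * hbs
    · simp)
  simp only [Pi.sub_apply] at hmono
  rw [hval] at hmono
  refine le_trans ?_ hmono
  have hexp : Real.exp (-b * β ^ 2) = Real.exp (-β ^ 2 / 2) * Real.exp (-β ^ 2 / α) := by
    rw [← Real.exp_add, hbdef]; congr 1; ring
  have hexp2 : Real.exp (-(1 / 2) * β ^ 2) = Real.exp (-β ^ 2 / 2) := by congr 1; ring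
  rw [hexp, hexp2]
  set q := Real.exp (-β ^ 2 / α) with hq
  have hq0 : 0 < q := Real.exp_pos _
  have hq1 : q ≤ 1 := Real.exp_le_one_iff.2 (by rw [neg_div]; simp; positivity)
  have hpow : s2 ^ ((3 : ℝ) / 2) = Real.sqrt s2 ^ 3 := by
    rw [Real.sqrt_eq_rpow, ← Real.rpow_natCast, ← Real.rpow_mul hs.le]; norm_num
  have hf := final_ineq (Real.sqrt_nonneg s2) (Real.sqrt_le_one.2 hs1) hq0.le hq1
  rw [Real.sq_sqrt hs.le] at hf
  rw [hpow]
  have hf2 : 1 - q * Real.sqrt s2 ^ 3 ≤ 2 * (1 - ρ * s2 * q) := by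
    have : ρ * (s2 * q) ≤ 1 * (s2 * q) := by gcongr
    linarith
  have hP : 0 ≤ c * (β * Real.exp (-β ^ 2 / 2)) := by positivity
  have := mul_le_mul_of_nonneg_left hf2 hP
  rw [div_eq_mul_inv, ← hc]
  linarith

lemma rhs_nonneg (α β : ℝ) (hα : 0 < α) (hβ : 0 < β) :
    0 ≤ (β * Real.exp (-β ^ 2 / 2) / Real.sqrt (2 * π)) *
        (1 - Real.exp (-β ^ 2 / α) * (α / (2 + α)) ^ ((3 : ℝ) / 2)) := by
  have hq1 : Real.exp (-β ^ 2 / α) ≤ 1 := Real.exp_le_one_iff.2 (by rw [neg_div]; simp; positivity)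
  have h2 : (α / (2 + α)) ^ ((3 : ℝ) / 2) ≤ 1 :=
    Real.rpow_le_one (by positivity) (by rw [div_le_one (by positivity)]; linarith) (by norm_num)
  have := mul_le_one₀ hq1 (by positivity) h2
  exact mul_nonneg (by positivity) (by linarith)

end TanhAux


/-- Let `x` be a unit vector and `M = E[a aᵀ · 1{|aᵀx| > β} · tanh((aᵀx)²/α)]` for
`a ~ N(0, I_n)`. Then `x` is a leading eigenvector of `M`: `x` is an eigenvector with
eigenvalue `λ₁`, every vector orthogonal to `x` is an eigenvector with a common eigenvalue
`λ₂ ≤ λ₁`, and the eigengap satisfies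
`λ₁ − λ₂ ≥ (β e^{−β²/2}/√(2π))(1 − e^{−β²/α}(α/(2+α))^{3/2})`. -/
theorem tanh_spectral_leading_eigenvector (n : ℕ) (x : Fin n → ℝ)
    (hx : ∑ i, x i ^ 2 = 1) (α β : ℝ) (hα : 0 < α) (hβ : 0 < β) :
    ∃ lam₁ lam₂ : ℝ,
      (Matrix.of fun i j =>
          ∫ a, a i * a j * (if β < |∑ k, a k * x k| then (1 : ℝ) else 0) *
            Real.tanh ((∑ k, a k * x k) ^ 2 / α) ∂(stdGaussian n)).mulVec x
        = lam₁ • x ∧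
      (∀ z : Fin n → ℝ, (∑ i, x i * z i) = 0 →
        (Matrix.of fun i j =>
            ∫ a, a i * a j * (if β < |∑ k, a k * x k| then (1 : ℝ) else 0) *
              Real.tanh ((∑ k, a k * x k) ^ 2 / α) ∂(stdGaussian n)).mulVec z
          = lam₂ • z) ∧
      lam₂ ≤ lam₁ ∧
      lam₁ - lam₂ ≥ (β * Real.exp (-β ^ 2 / 2) / Real.sqrt (2 * π)) *
        (1 - Real.exp (-β ^ 2 / α) * (α / (2 + α)) ^ ((3 : ℝ) / 2)) := by

  have hM : (Matrix.of fun i j =>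
          ∫ a, a i * a j * (if β < |∑ k, a k * x k| then (1 : ℝ) else 0) *
            Real.tanh ((∑ k, a k * x k) ^ 2 / α) ∂(stdGaussian n)) =
      Matrix.of fun i j => x i * x j * ∫ t, t ^ 2 * TanhAux.wt α β t ∂(gaussianReal 0 1) +
      ((if i = j then 1 else 0) - x i * x j) * ∫ t, TanhAux.wt α β t ∂(gaussianReal 0 1) := by
    ext i j
    rw [Matrix.of_apply, Matrix.of_apply,
      ← TanhAux.entry x _ hx (TanhAux.wt_meas α β) (TanhAux.wt_bd α β)]
    simp only [TanhAux.wt, TanhAux.lin, mul_assoc]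
    rfl
  have hg := TanhAux.gap α β hα hβ
  have h0 := TanhAux.rhs_nonneg α β hα hβ
  rw [hM]
  generalize ∫ t, t ^ 2 * TanhAux.wt α β t ∂(gaussianReal 0 1) = L1 at *
  generalize ∫ t, TanhAux.wt α β t ∂(gaussianReal 0 1) = L2 at *
  have hv : ∀ z : Fin n → ℝ, ∀ i, (Matrix.of fun i j => x i * x j * L1 +
      ((if i = j then 1 else 0) - x i * x j) * L2).mulVec z i =
      (x i * (L1 - L2)) * (∑ j, x j * z j) + L2 * z i := by
    intro z i
    simp only [Matrix.mulVec, dotProduct, Matrix.of_apply]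
    have : ∀ j, (x i * x j * L1 + ((if i = j then 1 else 0) - x i * x j) * L2) * z j =
        (x i * (L1 - L2)) * (x j * z j) + (if i = j then L2 * z j else 0) := by
      intro j; split_ifs <;> ring
    simp only [this, Finset.sum_add_distrib, ← Finset.mul_sum]
    simp
  refine ⟨L1, L2, ?_, ?_, by linarith, hg⟩
  · ext i
    rw [hv]
    simp only [← sq, hx, Pi.smul_apply, smul_eq_mul]
    ring
  · intro z hz
    ext i
    rw [hv, hz]
    simp
end

section
/- Define g(x) = x² f(x) where f is the TanhWFQ weight profile: f(x) = (1 − tanh(x² − x))·x restricted appropriately. Then for x < 0 or x > 1, the second derivative of t ↦ t² f(s(x)) in the form given satisfies: d²/dt² [ρ² t² f(s/(tρ))] = ρ² ((2x−1)² tanh(x² − x) − 1) · 2x³ sech²(x² − x) with x = s/(tρ), and this expression is bounded in absolute value by an absolute constant times ρ². -/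
open Real

lemma aux_tanh (u : ℝ) : HasDerivAt Real.tanh ((1 / Real.cosh u) ^ 2) u := by
  have hc := (Real.cosh_pos u).ne'
  have h := (Real.hasDerivAt_sinh u).div (Real.hasDerivAt_cosh u) hc
  have e : Real.tanh = Real.sinh / Real.cosh := by
    funext x
    simp [Real.tanh_eq_sinh_div_cosh]
  rw [e]
  refine h.congr_deriv (Eq.symm ?_)
  have := Real.cosh_sq u
  field_simp
  linarith

lemma aux_x (ρ s t : ℝ) (hρ : 0 < ρ) (ht : t ≠ 0) :
    HasDerivAt (fun t' : ℝ => s / (t' * ρ)) (-(s / (t * ρ)) / t) t := by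
  have h := ((hasDerivAt_id t).mul_const ρ).fun_inv (mul_ne_zero ht hρ.ne')
  have h2 := h.const_mul s
  simp only [id] at h2
  simp only [← div_eq_mul_inv] at h2
  refine h2.congr_deriv (Eq.symm ?_)
  field_simp

lemma aux_u (ρ s t : ℝ) (hρ : 0 < ρ) (ht : t ≠ 0) :
    HasDerivAt (fun t' : ℝ => (s / (t' * ρ)) ^ 2 - s / (t' * ρ))
      ((2 * (s / (t * ρ)) - 1) * (-(s / (t * ρ)) / t)) t := by
  have h := aux_x ρ s t hρ ht
  refine ((h.fun_pow 2).fun_sub h).congr_deriv (Eq.symm ?_)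
  push_cast
  ring

lemma aux_first (ρ s t : ℝ) (hρ : 0 < ρ) (ht : t ≠ 0) :
    HasDerivAt (fun t' : ℝ => ρ ^ 2 * t' ^ 2 *
            ((1 - Real.tanh ((s / (t' * ρ)) ^ 2 - s / (t' * ρ))) * (s / (t' * ρ))))
      (ρ * s * ((1 - Real.tanh ((s / (t * ρ)) ^ 2 - s / (t * ρ))) +
        (s / (t * ρ)) * (2 * (s / (t * ρ)) - 1) *
          (1 / Real.cosh ((s / (t * ρ)) ^ 2 - s / (t * ρ))) ^ 2)) t := by
  have hx := aux_x ρ s t hρ ht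
  have hT := (aux_tanh _).comp t (aux_u ρ s t hρ ht)
  have h := (((hasDerivAt_id t).fun_pow 2).const_mul (ρ ^ 2)).fun_mul ((hT.const_sub 1).fun_mul hx)
  simp only [Function.comp_def, id] at h
  refine h.congr_deriv (Eq.symm ?_)
  generalize Real.tanh ((s / (t * ρ)) ^ 2 - s / (t * ρ)) = T
  generalize 1 / Real.cosh ((s / (t * ρ)) ^ 2 - s / (t * ρ)) = S
  have hs : s = s / (t * ρ) * t * ρ := by field_simp
  generalize s / (t * ρ) = x at *
  subst hs
  field_simp
  push_cast
  ring

lemma aux_second (ρ s t : ℝ) (hρ : 0 < ρ) (ht : t ≠ 0) :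
    HasDerivAt (fun t : ℝ => ρ * s * ((1 - Real.tanh ((s / (t * ρ)) ^ 2 - s / (t * ρ))) +
        (s / (t * ρ)) * (2 * (s / (t * ρ)) - 1) *
          (1 / Real.cosh ((s / (t * ρ)) ^ 2 - s / (t * ρ))) ^ 2))
      (ρ ^ 2 * (((2 * (s / (t * ρ)) - 1) ^ 2 *
              Real.tanh ((s / (t * ρ)) ^ 2 - s / (t * ρ)) - 1) *
            (2 * (s / (t * ρ)) ^ 3) *
            (1 / Real.cosh ((s / (t * ρ)) ^ 2 - s / (t * ρ))) ^ 2)) t := by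
  have hx := aux_x ρ s t hρ ht
  have hu := aux_u ρ s t hρ ht
  have hT := (aux_tanh _).comp t hu
  have hC := (((Real.hasDerivAt_cosh _).comp t hu).fun_inv (Real.cosh_pos _).ne').fun_pow 2
  have h := (((hT.const_sub 1).fun_add
    ((hx.fun_mul ((hx.const_mul 2).sub_const 1)).fun_mul hC))).const_mul (ρ * s)
  simp only [Function.comp_def, ← one_div] at h
  refine h.congr_deriv (Eq.symm ?_)
  rw [Real.tanh_eq_sinh_div_cosh]
  have hc := (Real.cosh_pos ((s / (t * ρ)) ^ 2 - s / (t * ρ))).ne'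
  generalize Real.cosh ((s / (t * ρ)) ^ 2 - s / (t * ρ)) = c at *
  generalize Real.sinh ((s / (t * ρ)) ^ 2 - s / (t * ρ)) = S
  have hs : s = s / (t * ρ) * t * ρ := by field_simp
  clear h hT hC hu hx
  generalize s / (t * ρ) = x at *
  subst hs
  push_cast
  field_simp
  ring

lemma aux_bound (v : ℝ) (hv : v < 0 ∨ 1 < v) :
    |((2 * v - 1) ^ 2 * Real.tanh (v ^ 2 - v) - 1) * (2 * v ^ 3) *
          (1 / Real.cosh (v ^ 2 - v)) ^ 2| ≤ 1024 := by
  have hy : 0 ≤ v ^ 2 - v := by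
    rcases hv with h | h <;> nlinarith
  have h1 : (2 * v - 1) ^ 2 = 4 * (v ^ 2 - v) + 1 := by ring
  have h2 : v ^ 2 ≤ 2 * (v ^ 2 - v) + 1 := by nlinarith [sq_nonneg (v - 1)]
  rw [h1]
  generalize v ^ 2 - v = y at *
  have hc := Real.cosh_pos y
  have hT : |Real.tanh y| ≤ 1 := by
    exact (Real.abs_tanh_lt_one y).le
  have hA : |(4 * y + 1) * Real.tanh y - 1| ≤ 4 * y + 2 := by
    obtain ⟨ha, hb⟩ := abs_le.mp hT
    rw [abs_le]
    constructor <;> nlinarith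
  have hB : |2 * v ^ 3| ≤ 2 * (2 * y + 2) ^ 2 := by
    have e : |2 * v ^ 3| = 2 * (|v| * v ^ 2) := by
      rw [abs_mul, abs_pow, abs_two, ← sq_abs v]; ring
    have hv1 : |v| ≤ 2 * y + 2 := by
      nlinarith [sq_abs v, sq_nonneg (|v| - 1)]
    rw [e]
    have : |v| * v ^ 2 ≤ (2 * y + 2) * (2 * y + 2) :=
      mul_le_mul hv1 (by linarith) (sq_nonneg v) (by linarith)
    linarith
  have hE : (2 + y) ^ 3 ≤ 32 * Real.cosh y ^ 2 := by
    have e1 : 1 + y / 2 ≤ Real.exp (y / 2) := by linarith [Real.add_one_le_exp (y / 2)]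
    have e2 : Real.exp y = Real.exp (y / 2) ^ 2 := by
      rw [sq, ← Real.exp_add]; ring_nf
    have e3 : Real.exp y ≤ 2 * Real.cosh y := by
      rw [Real.cosh_eq]; linarith [Real.exp_pos (-y)]
    have e4 : (1 + y / 2) ^ 2 ≤ 2 * Real.cosh y := by
      have := pow_le_pow_left₀ (by linarith : (0 : ℝ) ≤ 1 + y / 2) e1 2
      linarith
    have e5 : ((1 + y / 2) ^ 2) ^ 2 ≤ (2 * Real.cosh y) ^ 2 :=
      pow_le_pow_left₀ (sq_nonneg _) e4 2
    have e6 : 0 ≤ (1 + y / 2) ^ 3 * (y / 2) := by positivity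
    nlinarith
  have hAB := mul_le_mul hA hB (abs_nonneg _) (by linarith)
  rw [abs_mul, abs_mul, abs_of_nonneg (sq_nonneg (1 / Real.cosh y)), one_div, inv_pow,
    ← div_eq_mul_inv, div_le_iff₀ (by positivity)]
  have : (4 * y + 2) * (2 * (2 * y + 2) ^ 2) ≤ 32 * (2 + y) ^ 3 := by
    have : 0 ≤ y ^ 2 := sq_nonneg y
    have : 0 ≤ y ^ 3 := by positivity
    nlinarith
  linarith

/-- On the region `x = s/(tρ) < 0` or `x > 1`, the second derivative of
`t ↦ ρ² t² f(s/(tρ))` (with `f(v) = (1 − tanh(v² − v))v`) equals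
`ρ² ((2x−1)² tanh(x² − x) − 1) · 2x³ sech²(x² − x)`, and the function
`v ↦ ((2v−1)² tanh(v² − v) − 1)·2v³ sech²(v² − v)` is bounded on `(−∞,0) ∪ (1,∞)`,
so the second derivative is bounded in absolute value by an absolute constant times `ρ²`. -/
theorem second_derivative_tanhWFQ :
    (∀ ρ s t : ℝ, 0 < ρ → t ≠ 0 →
      (s / (t * ρ) < 0 ∨ 1 < s / (t * ρ)) →
      deriv (deriv fun t' : ℝ =>
          ρ ^ 2 * t' ^ 2 *
            ((1 - Real.tanh ((s / (t' * ρ)) ^ 2 - s / (t' * ρ))) * (s / (t' * ρ)))) t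
        = ρ ^ 2 * (((2 * (s / (t * ρ)) - 1) ^ 2 *
              Real.tanh ((s / (t * ρ)) ^ 2 - s / (t * ρ)) - 1) *
            (2 * (s / (t * ρ)) ^ 3) *
            (1 / Real.cosh ((s / (t * ρ)) ^ 2 - s / (t * ρ))) ^ 2)) ∧
    ∃ C : ℝ, ∀ v : ℝ, (v < 0 ∨ 1 < v) →
      |((2 * v - 1) ^ 2 * Real.tanh (v ^ 2 - v) - 1) * (2 * v ^ 3) *
          (1 / Real.cosh (v ^ 2 - v)) ^ 2| ≤ C := by
  refine ⟨?_, 1024, aux_bound⟩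
  intro ρ s t hρ ht _
  have hev : (deriv fun t' : ℝ => ρ ^ 2 * t' ^ 2 *
            ((1 - Real.tanh ((s / (t' * ρ)) ^ 2 - s / (t' * ρ))) * (s / (t' * ρ))))
      =ᶠ[nhds t] fun t : ℝ => ρ * s * ((1 - Real.tanh ((s / (t * ρ)) ^ 2 - s / (t * ρ))) +
        (s / (t * ρ)) * (2 * (s / (t * ρ)) - 1) *
          (1 / Real.cosh ((s / (t * ρ)) ^ 2 - s / (t * ρ))) ^ 2) := by
    filter_upwards [isOpen_ne.mem_nhds ht] with r hr
    exact (aux_first ρ s r hρ hr).deriv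
  rw [hev.deriv_eq]
  exact (aux_second ρ s t hρ ht).deriv
end
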